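/- Let m > p ≥ 2, X a real m×p matrix, and ν_i > 0. Suppose w* = (w_1*,…,w_m*) ∈ S_m satisfies f(w*) > 0 (which forces w_i* < 1 for every i). Then w* is A-optimal among S_m, i.e., h(w*) = max_{w ∈ S_m} h(w), if and only if for every i = 1,…,m, h_i(w_i*) = max_{x ∈ [0,1]} h_i(x), where h_i is the lift-one function associated with w* and the index i. -/

import Mathlib

/-!
Write `M(w) = XᵀWX`, which is linear in `w` and positive semidefinite on the simplex. Everything
rests on the convexity of `M ↦ tr M⁻¹` on positive definite matrices, in the gradient form
`2 tr A⁻¹ ≤ tr B⁻¹ + tr (A⁻¹ B A⁻¹)`, which is the nonnegativity of the trace of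
`(B⁻¹ - A⁻¹) B (B⁻¹ - A⁻¹)` (lemma `two_trace_inv_le`).

The forward direction holds because the lift-one allocations lie in the simplex and pass through
`w` itself. For the converse, the lift-one curve of index `i` is the segment `(1 - t) w + t eᵢ`.
If `Aₜ` denotes the information matrix along it and `M = A₀`, then lift-one optimality says
`tr Aₜ⁻¹ ≥ tr M⁻¹`; convexity at `Aₜ` turns this into `tr (Aₜ⁻¹ M(eᵢ) Aₜ⁻¹) ≤ tr (Aₜ⁻¹ M Aₜ⁻¹)`,
and letting `t → 0⁺` gives `tr (M⁻¹ M(eᵢ) M⁻¹) ≤ tr M⁻¹` (lemma `trace_conj_le_of_segment`).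
Averaging over `i` with weights `v` yields `tr (M⁻¹ M(v) M⁻¹) ≤ tr M⁻¹`, and convexity at `M` gives
`tr M⁻¹ ≤ tr M(v)⁻¹`, which is optimality of `w`.
-/

open Matrix

def dropIdx {p : ℕ} (j : Fin p) (k : Fin (p - 1)) : Fin p :=
  if h : (k : ℕ) < (j : ℕ) then ⟨k, lt_trans h j.isLt⟩
  else ⟨(k : ℕ) + 1, by have hk := k.isLt; omega⟩

noncomputable def infoM {m p : ℕ} (X : Matrix (Fin m) (Fin p) ℝ) (ν w : Fin m → ℝ) :
    Matrix (Fin p) (Fin p) ℝ :=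
  Xᵀ * Matrix.diagonal (fun i => w i * ν i) * X

noncomputable def fFun {m p : ℕ} (X : Matrix (Fin m) (Fin p) ℝ) (ν w : Fin m → ℝ) : ℝ :=
  (infoM X ν w).det

noncomputable def hFun {m p : ℕ} (X : Matrix (Fin m) (Fin p) ℝ) (ν w : Fin m → ℝ) : ℝ :=
  if 0 < fFun X ν w then ((infoM X ν w)⁻¹).trace⁻¹ else 0

noncomputable def liftW {m : ℕ} (w : Fin m → ℝ) (i : Fin m) (x : ℝ) : Fin m → ℝ :=
  fun l => if l = i then x else w l * (1 - x) / (1 - w i)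

open Filter Topology

/-! ### Convexity of the trace of the inverse -/

/-- The gradient inequality for the convex function `A ↦ tr A⁻¹`, between `A` and `B`. -/
lemma two_trace_inv_le {n : Type*} [Fintype n] [DecidableEq n] {A B : Matrix n n ℝ}
    (hA : A.PosDef) (hB : B.PosDef) :
    2 * (A⁻¹).trace ≤ (B⁻¹).trace + (A⁻¹ * B * A⁻¹).trace := by
  have hD : (B⁻¹ - A⁻¹)ᴴ = B⁻¹ - A⁻¹ := by
    rw [conjTranspose_sub, hA.inv.isHermitian.eq, hB.inv.isHermitian.eq]
  have h := (hB.posSemidef.conjTranspose_mul_mul_same (B⁻¹ - A⁻¹)).trace_nonneg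
  have hBu : IsUnit B.det := (isUnit_iff_isUnit_det B).1 hB.isUnit
  have e : (B⁻¹ - A⁻¹) * B * (B⁻¹ - A⁻¹) = B⁻¹ - A⁻¹ - A⁻¹ + A⁻¹ * B * A⁻¹ := by
    rw [sub_mul, sub_mul, nonsing_inv_mul B hBu, one_mul, mul_sub,
      mul_nonsing_inv_cancel_right _ _ hBu]
    abel
  rw [hD, e, trace_add, trace_sub, trace_sub] at h
  linarith

/-- First-order optimality condition: if `tr A⁻¹` does not drop below its value at `M` on the
segment from `M` towards `E`, then its derivative at `M` in the direction `E - M` is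
nonnegative. -/
lemma trace_conj_le_of_segment {n : Type*} [Fintype n] [DecidableEq n] {M E : Matrix n n ℝ}
    (hM : M.PosDef) (hE : E.PosSemidef)
    (hmin : ∀ t : ℝ, 0 < t → t < 1 → (M⁻¹).trace ≤ (((1 - t) • M + t • E)⁻¹).trace) :
    (M⁻¹ * E * M⁻¹).trace ≤ (M⁻¹).trace := by
  set A : ℝ → Matrix n n ℝ := fun t => (1 - t) • M + t • E with hAdef
  have hA0 : A 0 = M := by simp [hAdef]
  have hdet : M.det ≠ 0 := hM.det_pos.ne'
  have hMu : IsUnit M.det := hdet.isUnit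
  have hcA : Continuous A := by fun_prop
  have hinv : ContinuousAt (fun t => (A t)⁻¹) 0 := by
    refine ContinuousAt.comp (g := fun B : Matrix n n ℝ => B⁻¹) ?_ hcA.continuousAt
    apply continuousAt_matrix_inv
    rw [hA0, Ring.inverse_eq_inv']
    exact continuousAt_inv₀ hdet
  have hlim : ∀ C : Matrix n n ℝ, Tendsto (fun t => ((A t)⁻¹ * C * (A t)⁻¹).trace) (𝓝[>] 0)
      (𝓝 (M⁻¹ * C * M⁻¹).trace) := by
    intro C
    have hc : ContinuousAt (fun t => ((A t)⁻¹ * C * (A t)⁻¹).trace) 0 :=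
      (continuous_id.matrix_trace).continuousAt.comp ((hinv.mul continuousAt_const).mul hinv)
    have h := hc.tendsto
    rw [hA0] at h
    exact h.mono_left nhdsWithin_le_nhds
  have hkey : ∀ᶠ t in 𝓝[>] (0 : ℝ),
      ((A t)⁻¹ * E * (A t)⁻¹).trace ≤ ((A t)⁻¹ * M * (A t)⁻¹).trace := by
    filter_upwards [Ioo_mem_nhdsGT (zero_lt_one' ℝ)] with t ht
    have hAt : (A t).PosDef :=
      (hM.smul (sub_pos.2 ht.2)).add_posSemidef (hE.smul ht.1.le)
    have h1 := two_trace_inv_le hAt hM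
    have h2 := hmin t ht.1 ht.2
    have h3 : ((A t)⁻¹ * A t * (A t)⁻¹).trace = ((A t)⁻¹).trace := by
      rw [nonsing_inv_mul _ hAt.det_pos.ne'.isUnit, one_mul]
    have h4 : ((A t)⁻¹ * A t * (A t)⁻¹).trace = (1 - t) * ((A t)⁻¹ * M * (A t)⁻¹).trace
        + t * ((A t)⁻¹ * E * (A t)⁻¹).trace := by
      have e : (A t)⁻¹ * A t * (A t)⁻¹ = (1 - t) • ((A t)⁻¹ * M * (A t)⁻¹)
          + t • ((A t)⁻¹ * E * (A t)⁻¹) := by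
        conv_lhs => rw [show A t = (1 - t) • M + t • E from rfl]
        simp only [hAdef, mul_add, add_mul, mul_smul_comm, smul_mul_assoc]
      rw [e, trace_add, trace_smul, trace_smul, smul_eq_mul, smul_eq_mul]
    have h2' : (M⁻¹).trace ≤ ((A t)⁻¹).trace := h2
    have h5 : t * ((A t)⁻¹ * E * (A t)⁻¹).trace ≤ t * ((A t)⁻¹ * M * (A t)⁻¹).trace := by
      linarith
    exact le_of_mul_le_mul_left h5 ht.1
  have h := le_of_tendsto_of_tendsto (hlim E) (hlim M) hkey
  rwa [nonsing_inv_mul M hMu, one_mul] at h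

/-! ### The information matrix and the lift-one curve -/

lemma infoM_apply {m p : ℕ} (X : Matrix (Fin m) (Fin p) ℝ) (ν w : Fin m → ℝ) (a b : Fin p) :
    infoM X ν w a b = ∑ i, w i * (X i a * ν i * X i b) := by
  rw [infoM, mul_apply]
  simp only [mul_diagonal, transpose_apply]
  exact Finset.sum_congr rfl fun i _ => by ring

lemma infoM_posSemidef {m p : ℕ} (X : Matrix (Fin m) (Fin p) ℝ) {ν w : Fin m → ℝ}
    (hν : ∀ i, 0 < ν i) (hw : ∀ i, 0 ≤ w i) : (infoM X ν w).PosSemidef := by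
  have h : (diagonal fun i => w i * ν i).PosSemidef :=
    PosSemidef.diagonal fun i => mul_nonneg (hw i) (hν i).le
  simpa [infoM] using h.conjTranspose_mul_mul_same X

lemma infoM_posDef {m p : ℕ} (X : Matrix (Fin m) (Fin p) ℝ) {ν w : Fin m → ℝ}
    (hν : ∀ i, 0 < ν i) (hw : ∀ i, 0 ≤ w i) (hf : 0 < fFun X ν w) : (infoM X ν w).PosDef :=
  (infoM_posSemidef X hν hw).posDef_iff_det_ne_zero.2 hf.ne'

lemma infoM_segment {m p : ℕ} (X : Matrix (Fin m) (Fin p) ℝ) (ν w u : Fin m → ℝ) (t : ℝ) :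
    infoM X ν ((1 - t) • w + t • u) = (1 - t) • infoM X ν w + t • infoM X ν u := by
  ext a b
  simp only [infoM_apply, Matrix.add_apply, Matrix.smul_apply, Pi.add_apply, Pi.smul_apply,
    smul_eq_mul, Finset.mul_sum, ← Finset.sum_add_distrib]
  exact Finset.sum_congr rfl fun i _ => by ring

lemma infoM_single {m p : ℕ} (X : Matrix (Fin m) (Fin p) ℝ) (ν : Fin m → ℝ) (i : Fin m) :
    infoM X ν (Pi.single i 1) = vecMulVec (fun a => X i a * ν i) (X i) := by
  ext a b
  simp [infoM_apply, vecMulVec_apply, Pi.single_apply]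

lemma infoM_eq_sum {m p : ℕ} (X : Matrix (Fin m) (Fin p) ℝ) (ν v : Fin m → ℝ) :
    infoM X ν v = ∑ i, v i • infoM X ν (Pi.single i 1) := by
  ext a b
  simp [infoM_apply, infoM_single, vecMulVec_apply, Matrix.sum_apply]

/-- Along the lift-one curve, `x = (1 - t) wᵢ + t` corresponds to the point with parameter `t` on
the segment from `w` to the vertex `eᵢ`. -/
lemma liftW_segment {m : ℕ} (w : Fin m → ℝ) (i : Fin m) (hi : w i < 1) (t : ℝ) :
    liftW w i ((1 - t) * w i + t) = (1 - t) • w + t • Pi.single i 1 := by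
  have h : 1 - w i ≠ 0 := (sub_pos.2 hi).ne'
  funext l
  by_cases hl : l = i
  · subst hl
    simp [liftW]
  · simp only [liftW, hl, if_false, Pi.add_apply, Pi.smul_apply, smul_eq_mul, ne_eq,
      not_false_eq_true, Pi.single_eq_of_ne, mul_zero, add_zero]
    field_simp
    ring

lemma liftW_self {m : ℕ} (w : Fin m → ℝ) (i : Fin m) (hi : w i < 1) :
    liftW w i (w i) = w := by
  simpa using liftW_segment w i hi 0

lemma liftW_nonneg {m : ℕ} {w : Fin m → ℝ} (hw : ∀ l, 0 ≤ w l) (i : Fin m) (hi : w i < 1)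
    {x : ℝ} (hx : x ∈ Set.Icc (0 : ℝ) 1) (l : Fin m) : 0 ≤ liftW w i x l := by
  unfold liftW
  split_ifs
  · exact hx.1
  · exact div_nonneg (mul_nonneg (hw l) (sub_nonneg.2 hx.2)) (sub_pos.2 hi).le

lemma liftW_sum {m : ℕ} {w : Fin m → ℝ} (hw1 : ∑ l, w l = 1) (i : Fin m) (hi : w i < 1)
    (x : ℝ) : ∑ l, liftW w i x l = 1 := by
  have h : 1 - w i ≠ 0 := (sub_pos.2 hi).ne'
  have hx : x = (1 - (x - w i) / (1 - w i)) * w i + (x - w i) / (1 - w i) := by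
    field_simp
    ring
  rw [hx, liftW_segment w i hi]
  simp [Finset.sum_add_distrib, ← Finset.mul_sum, hw1, Finset.sum_pi_single']

/-- A vertex of the simplex has a singular information matrix, of rank at most one. -/
lemma lt_one_of_fFun_pos {m p : ℕ} (hp : 2 ≤ p) (X : Matrix (Fin m) (Fin p) ℝ)
    (ν w : Fin m → ℝ) (hw0 : ∀ i, 0 ≤ w i) (hw1 : ∑ i, w i = 1) (hf : 0 < fFun X ν w)
    (i : Fin m) : w i < 1 := by
  by_contra! hi
  have hsplit := Finset.add_sum_erase Finset.univ w (Finset.mem_univ i)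
  have hnn : 0 ≤ ∑ l ∈ Finset.univ.erase i, w l := Finset.sum_nonneg fun l _ => hw0 l
  have hz : ∑ l ∈ Finset.univ.erase i, w l = 0 := by linarith
  have hw : w = Pi.single i 1 := by
    funext l
    by_cases hl : l = i
    · subst hl
      rw [Pi.single_eq_same]
      linarith
    · rw [Pi.single_eq_of_ne hl]
      exact (Finset.sum_eq_zero_iff_of_nonneg fun l _ => hw0 l).1 hz l (by simp [hl])
  have : Nontrivial (Fin p) := Fin.nontrivial_iff_two_le.2 hp
  rw [fFun, hw, infoM_single, det_vecMulVec] at hf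
  exact lt_irrefl _ hf

theorem stmt14 {m p : ℕ} (hp : 2 ≤ p) (hmp : p < m)
    (X : Matrix (Fin m) (Fin p) ℝ) (ν : Fin m → ℝ) (hν : ∀ i, 0 < ν i)
    (w : Fin m → ℝ) (hw0 : ∀ i, 0 ≤ w i) (hw1 : ∑ i, w i = 1)
    (hf : 0 < fFun X ν w) :
    (∀ i, w i < 1) ∧
    ((∀ v : Fin m → ℝ, (∀ i, 0 ≤ v i) → ∑ i, v i = 1 → hFun X ν v ≤ hFun X ν w)
      ↔ ∀ i, ∀ x ∈ Set.Icc (0 : ℝ) 1,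
          hFun X ν (liftW w i x) ≤ hFun X ν (liftW w i (w i))) := by
  have hlt := lt_one_of_fFun_pos hp X ν w hw0 hw1 hf
  refine ⟨hlt, fun h i x hx => ?_, fun h v hv0 hv1 => ?_⟩
  · rw [liftW_self w i (hlt i)]
    exact h _ (liftW_nonneg hw0 i (hlt i) hx) (liftW_sum hw1 i (hlt i) x)
  have : Nonempty (Fin p) := ⟨⟨0, by omega⟩⟩
  have hM := infoM_posDef X hν hw0 hf
  have hMpos : 0 < ((infoM X ν w)⁻¹).trace := hM.inv.trace_pos
  have hE : ∀ i, (infoM X ν (Pi.single i 1)).PosSemidef := fun i =>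
    infoM_posSemidef X hν fun l => by
      by_cases hl : l = i
      · subst hl
        simp
      · simp [hl]
  have hvert : ∀ i, ((infoM X ν w)⁻¹ * infoM X ν (Pi.single i 1) * (infoM X ν w)⁻¹).trace
      ≤ ((infoM X ν w)⁻¹).trace := by
    intro i
    refine trace_conj_le_of_segment hM (hE i) fun t ht0 ht1 => ?_
    have hx : (1 - t) * w i + t ∈ Set.Icc (0 : ℝ) 1 :=
      ⟨by nlinarith [hw0 i], by nlinarith [hlt i]⟩
    have hi := h i _ hx
    have hAt : ((1 - t) • infoM X ν w + t • infoM X ν (Pi.single i 1)).PosDef :=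
      (hM.smul (sub_pos.2 ht1)).add_posSemidef ((hE i).smul ht0.le)
    have hft : 0 < fFun X ν ((1 - t) • w + t • Pi.single i 1) := by
      rw [fFun, infoM_segment]
      exact hAt.det_pos
    rw [liftW_self w i (hlt i), liftW_segment w i (hlt i), hFun, hFun, if_pos hft, if_pos hf,
      infoM_segment] at hi
    exact (inv_le_inv₀ hAt.inv.trace_pos hMpos).1 hi
  have havg : ((infoM X ν w)⁻¹ * infoM X ν v * (infoM X ν w)⁻¹).trace
      ≤ ((infoM X ν w)⁻¹).trace := by
    rw [infoM_eq_sum X ν v, Finset.mul_sum, Finset.sum_mul, trace_sum]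
    calc _ ≤ ∑ i, v i * ((infoM X ν w)⁻¹).trace := by
          refine Finset.sum_le_sum fun i _ => ?_
          rw [mul_smul_comm, smul_mul_assoc, trace_smul, smul_eq_mul]
          exact mul_le_mul_of_nonneg_left (hvert i) (hv0 i)
      _ = ((infoM X ν w)⁻¹).trace := by rw [← Finset.sum_mul, hv1, one_mul]
  by_cases hfv : 0 < fFun X ν v
  · have hN := infoM_posDef X hν hv0 hfv
    have hconv := two_trace_inv_le hM hN
    rw [hFun, hFun, if_pos hfv, if_pos hf]
    exact (inv_le_inv₀ hN.inv.trace_pos hMpos).2 (by linarith)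
  · rw [hFun, hFun, if_neg hfv, if_pos hf]
    exact (inv_pos.2 hMpos).le
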